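/- If q ≥ ns + Σ_{t=1}^{s} C(s,t)·s·t·(t−1)/2, then there exist ns pairwise distinct elements λ_0, …, λ_{ns−1} ∈ F_q satisfying the local constraints, i.e., det(A_{a,B}) ≠ 0 for every a ∈ {0,…,n/s−1} and every nonempty subset B ⊆ {0,…,s−1}. -/

import Mathlib

open Matrix

/-- The `u`-th digit of `i` in base `s`. -/
def digit (s i u : ℕ) : ℕ := i / s ^ u % s

open scoped Classical in
/-- The `z`-th entry of the `(i,j)` block (a length-`t` column vector, `0 ≤ z < t`) of the
block matrix `A_{a,b}^{(t)}`; the group size is `g` (`g = s` for the first construction and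
`g = s + 1` for the second), so the relevant `λ`-index is `a·s·g + b·s + j_a`. -/
noncomputable def Aent {F : Type*} [Field F] (lam : ℕ → F) (s g a b i j z : ℕ) : F :=
  if i = j then lam (a * s * g + b * s + digit s j a) ^ z
  else if digit s i a = b ∧ digit s j a ≠ b ∧ (∀ u, u ≠ a → digit s i u = digit s j u) then
    -(lam (a * s * g + b * s + digit s j a) ^ z)
  else 0

/-- `A_{a,b}^{(t)}` as an `ℓt × ℓ` matrix; row `ρ` encodes block row `ρ / t` and
inner row `ρ % t`. -/
noncomputable def Amat {F : Type*} [Field F] (lam : ℕ → F) (s g ℓ a b t : ℕ) :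
    Matrix (Fin (ℓ * t)) (Fin ℓ) F :=
  Matrix.of fun ρ j => Aent lam s g a b ((ρ : ℕ) / t) (j : ℕ) ((ρ : ℕ) % t)

/-- The `m`-th smallest element of the finite set `B ⊆ ℕ` (junk value `0` if `m ≥ |B|`). -/
def enum (B : Finset ℕ) (m : ℕ) : ℕ := (B.sort (· ≤ ·)).getD m 0

/-- `A_{a,B}^{(t)} = [A_{a,b₁}^{(t)} | ⋯ | A_{a,b_v}^{(t)}]` as an `ℓt × ℓ|B|` matrix:
row `ρ` encodes block row `ρ / t` and inner row `ρ % t`; column `κ` selects the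
`κ / ℓ`-th member of `B` and inner column `κ % ℓ`. -/
noncomputable def AmatB {F : Type*} [Field F] (lam : ℕ → F) (s g ℓ a t : ℕ) (B : Finset ℕ) :
    Matrix (Fin (ℓ * t)) (Fin (ℓ * B.card)) F :=
  Matrix.of fun ρ κ =>
    Aent lam s g a (enum B ((κ : ℕ) / ℓ)) ((ρ : ℕ) / t) ((κ : ℕ) % ℓ) ((ρ : ℕ) % t)

/-- The local (in-group) constraints: every square matrix `A_{a,B}` (for a group index
`a < groups` and a nonempty `B ⊆ {0, …, g-1}`) is invertible. -/
def LocalConstraints {F : Type*} [Field F] (lam : ℕ → F) (s g ℓ groups : ℕ) : Prop :=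
  ∀ a < groups, ∀ B ⊆ Finset.range g, B.Nonempty → (AmatB lam s g ℓ a B.card B).det ≠ 0

/-!
The blocks of `A_{a,B}` couple two block indices only when they agree in every base-`s` digit other
than the `a`-th, so after a permutation of rows and columns `A_{a,B}` is block diagonal with copies
of one small matrix `K_{a,B}`. Treat the `λ_i` as indeterminates. Then `det K_{a,B}` is a nonzero
polynomial: if `λ_{as² + bs + j}` is specialised to a quantity depending on `b` alone, `K_{a,B}`
factors into a Vandermonde part and a block diagonal part with unimodular blocks. Each indeterminate
occurs in a single column of a single `K_{a,B}` for given `B`, so its degree in `det K_{a,B}` is at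
most `|B| - 1`. The product of all these determinants with the Vandermonde determinant of the
indeterminates therefore has small degree in each of them, and the Combinatorial Nullstellensatz
gives a point of the grid where it does not vanish.
-/

section Avoidance

open MvPolynomial

variable {σ R : Type*} [CommRing R]

theorem sum_ite_le_of_injective {ι : Type*} [Fintype ι] [DecidableEq σ] {v : ι → σ}
    (hv : Function.Injective v) (x : σ) (e : ℕ) : ∑ i, (if v i = x then e else 0) ≤ e := by
  have hcard : (Finset.univ.filter fun i => v i = x).card ≤ 1 :=
    Finset.card_le_one.2 fun i hi j hj =>
      hv ((Finset.mem_filter.1 hi).2.trans (Finset.mem_filter.1 hj).2.symm)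
  rw [← Finset.sum_filter, Finset.sum_const, smul_eq_mul]
  simpa using Nat.mul_le_mul_right e hcard

theorem degreeOf_det_le {n : Type*} [Fintype n] [DecidableEq n] {A : Matrix n n (MvPolynomial σ R)}
    {x : σ} {d : n → ℕ} (hA : ∀ i j, degreeOf x (A i j) ≤ d j) :
    degreeOf x A.det ≤ ∑ j, d j := by
  rw [Matrix.det_apply]
  refine (degreeOf_sum_le x _ _).trans (Finset.sup_le fun τ _ => ?_)
  have hterm : degreeOf x (∏ j, A (τ j) j) ≤ ∑ j, d j :=
    (degreeOf_prod_le x _ _).trans (Finset.sum_le_sum fun j _ => hA _ j)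
  rcases Int.units_eq_one_or (Equiv.Perm.sign τ) with h | h
  · simpa [h] using hterm
  · simpa [h] using hterm

theorem degreeOf_X_pow_le [DecidableEq σ] {x i : σ} {k e : ℕ} (hk : k ≤ e) :
    degreeOf x (X i ^ k : MvPolynomial σ R) ≤ if i = x then e else 0 := by
  rcases subsingleton_or_nontrivial R with _ | _
  · simp [Subsingleton.elim (X i ^ k : MvPolynomial σ R) 0]
  split_ifs with h
  · rw [h, degreeOf_X_self_pow]
    exact hk
  · rw [degreeOf_X_pow_of_ne k (Ne.symm h)]

theorem degreeOf_det_vandermonde_X_le {M : ℕ} {v : Fin M → σ} (hv : Function.Injective v) (x : σ) :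
    degreeOf x (vandermonde fun i => (X (v i) : MvPolynomial σ R)).det ≤ M - 1 := by
  classical
  rw [← det_transpose]
  refine (degreeOf_det_le (d := fun j => if v j = x then M - 1 else 0) fun i j => ?_).trans
    (sum_ite_le_of_injective hv x _)
  exact degreeOf_X_pow_le (Nat.le_sub_one_of_lt i.2)

variable [IsDomain R]

theorem exists_mem_eval_ne_zero {P : MvPolynomial σ R} (hP : P ≠ 0) (S : σ → Finset R)
    (hdeg : ∀ i, degreeOf i P < (S i).card) :
    ∃ x : σ → R, (∀ i, x i ∈ S i) ∧ eval x P ≠ 0 := by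
  obtain ⟨n, f, hf, Q, rfl⟩ := exists_fin_rename P
  choose c hc using fun i => Finset.card_pos.1 ((Nat.zero_le _).trans_lt (hdeg i))
  by_contra! hzero
  suffices Q = 0 from hP (by rw [this, map_zero])
  refine eq_zero_of_eval_zero_at_prod_finset Q (fun i => S (f i))
    (fun i => (degreeOf_rename_of_injective hf i).symm.trans_lt (hdeg (f i))) fun y hy => ?_
  have hext : ∀ i, Function.extend f y c i ∈ S i := by
    intro i
    by_cases hi : ∃ j, f j = i
    · obtain ⟨j, rfl⟩ := hi
      rw [hf.extend_apply]
      exact hy j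
    · rw [Function.extend_apply' _ _ _ hi]
      exact hc i
  simpa only [eval_rename, Function.extend_comp hf] using hzero _ hext

theorem exists_mem_injective_eval_ne_zero {κ : Type*} {K : Finset κ} {P : κ → MvPolynomial σ R}
    (hP : ∀ k ∈ K, P k ≠ 0) {M : ℕ} {v : Fin M → σ} (hv : Function.Injective v)
    (S : σ → Finset R) (hdeg : ∀ i, M - 1 + ∑ k ∈ K, degreeOf i (P k) < (S i).card) :
    ∃ x : σ → R, (∀ i, x i ∈ S i) ∧ Function.Injective (x ∘ v) ∧ ∀ k ∈ K, eval x (P k) ≠ 0 := by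
  let V : MvPolynomial σ R := (vandermonde fun i => X (v i)).det
  have hV : V ≠ 0 := det_vandermonde_ne_zero_iff.2 (X_injective.comp hv)
  obtain ⟨x, hxS, hx⟩ := exists_mem_eval_ne_zero
    (mul_ne_zero hV (Finset.prod_ne_zero_iff.2 hP)) S fun i =>
      ((degreeOf_mul_le i _ _).trans (Nat.add_le_add (degreeOf_det_vandermonde_X_le hv i)
        (degreeOf_prod_le i _ _))).trans_lt (hdeg i)
  rw [map_mul, map_prod] at hx
  refine ⟨x, hxS, ?_, Finset.prod_ne_zero_iff.1 (right_ne_zero_of_mul hx)⟩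
  have hevalV : eval x V = (vandermonde (x ∘ v)).det := by
    rw [RingHom.map_det]
    congr 1
    ext i j
    simp
  rw [← det_vandermonde_ne_zero_iff, ← hevalV]
  exact left_ne_zero_of_mul hx

end Avoidance

section BlockVandermonde

variable {ι R R' : Type*} [Fintype ι] [DecidableEq ι] [CommRing R] [CommRing R'] {t : ℕ}

/-- The square matrix built from `t` integer matrices `C₀, …, C_{t-1}` and one node `lam (j, m)` per
column: its `((i, z), (j, m))` entry is `C_m(i, j) · lam(j, m)^z`. -/
def blockVandermonde (C : Fin t → Matrix ι ι ℤ) (lam : ι × Fin t → R) :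
    Matrix (ι × Fin t) (ι × Fin t) R :=
  Matrix.of fun ρ κ => (C κ.2 ρ.1 κ.1 : R) * lam κ ^ (ρ.2 : ℕ)

theorem map_blockVandermonde (φ : R →+* R') (C : Fin t → Matrix ι ι ℤ) (lam : ι × Fin t → R) :
    φ.mapMatrix (blockVandermonde C lam) = blockVandermonde C (φ ∘ lam) := by
  ext ρ κ
  simp [blockVandermonde]

theorem blockVandermonde_comp_snd (C : Fin t → Matrix ι ι ℤ) (μ : Fin t → R) :
    blockVandermonde C (μ ∘ Prod.snd) =
      kroneckerMap (· * ·) (1 : Matrix ι ι R) (vandermonde μ)ᵀ *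
        blockDiagonal fun m => (C m).map (Int.cast : ℤ → R) := by
  ext ⟨i, z⟩ ⟨j, m⟩
  simp [blockVandermonde, Matrix.mul_apply, Fintype.sum_prod_type, blockDiagonal_apply,
    Matrix.one_apply, mul_comm]

theorem det_blockVandermonde_comp_snd (C : Fin t → Matrix ι ι ℤ) (μ : Fin t → R) :
    (blockVandermonde C (μ ∘ Prod.snd)).det =
      (vandermonde μ).det ^ Fintype.card ι * ∏ m, ((C m).det : R) := by
  rw [blockVandermonde_comp_snd, det_mul, det_kronecker, det_blockDiagonal]
  simp [Int.cast_det]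

open MvPolynomial in
theorem degreeOf_det_blockVandermonde_le {σ : Type*} [DecidableEq σ] (C : Fin t → Matrix ι ι ℤ)
    (v : ι × Fin t → σ) (x : σ) :
    degreeOf x (blockVandermonde C fun κ => (X (v κ) : MvPolynomial σ R)).det ≤
      ∑ κ, if v κ = x then t - 1 else 0 := by
  refine degreeOf_det_le fun ρ κ => ?_
  rw [blockVandermonde, Matrix.of_apply, ← map_intCast (MvPolynomial.C : R →+* MvPolynomial σ R)]
  exact (degreeOf_C_mul_le _ x _).trans (degreeOf_X_pow_le (Nat.le_sub_one_of_lt ρ.2.2))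

end BlockVandermonde

section Kernel

theorem enum_eq_orderEmbOfFin (B : Finset ℕ) (m : Fin B.card) :
    enum B m = B.orderEmbOfFin rfl m := by
  rw [enum, Finset.orderEmbOfFin_apply, List.getD_eq_getElem, Fin.getElem_fin]

theorem enum_mem (B : Finset ℕ) (m : Fin B.card) : enum B m ∈ B := by
  rw [enum_eq_orderEmbOfFin]
  exact B.orderEmbOfFin_mem rfl m

theorem enum_injective (B : Finset ℕ) : Function.Injective fun m : Fin B.card => enum B m := by
  simp only [enum_eq_orderEmbOfFin]
  exact (B.orderEmbOfFin rfl).injective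

/-- The coefficient pattern of the paper's kernel matrix `K_{a,b}`: ones on the diagonal and `-1` in
the rest of row `b`. If `b ≥ s` this is the identity matrix. -/
def kernelSigns (s b : ℕ) : Matrix (Fin s) (Fin s) ℤ :=
  Matrix.of fun i j => if i = j then 1 else if (i : ℕ) = b then -1 else 0

theorem det_kernelSigns (s b : ℕ) : (kernelSigns s b).det = 1 := by
  by_cases hb : b < s
  · let r : Fin s → ℤ := fun j => if (⟨b, hb⟩ : Fin s) = j then 1 else -1
    have hrow : kernelSigns s b = (1 : Matrix (Fin s) (Fin s) ℤ).updateRow ⟨b, hb⟩ r := by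
      ext i j
      by_cases hi : i = ⟨b, hb⟩
      · subst hi
        simp [kernelSigns, r]
      · have hib : (i : ℕ) ≠ b := fun h => hi (Fin.ext h)
        simp [kernelSigns, updateRow_ne hi, Matrix.one_apply, hib]
    rw [hrow, ← cramer_transpose_apply, transpose_one, cramer_one]
    simp [r]
  · have hone : kernelSigns s b = 1 := by
      ext i j
      have hib : (i : ℕ) ≠ b := fun h => hb (h ▸ i.2)
      simp [kernelSigns, Matrix.one_apply, hib]
    rw [hone, det_one]

/-- The index of the `λ` appearing in column `(j, m)` of `K_{a,B}`, for groups of size `g`. -/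
def nodeIndex (s g a : ℕ) (B : Finset ℕ) (κ : Fin s × Fin B.card) : ℕ :=
  a * s * g + enum B κ.2 * s + κ.1

/-- The paper's `[K_{a,b_1} | ⋯ | K_{a,b_v}]` for `B = {b_1 < ⋯ < b_v}` without the identity factors
`I_{s^a}`, so that only the `a`-th digit of a block index remains. The entries lie in an arbitrary
ring to allow indeterminates as the `λ_i`. -/
def kernelMatrix {R : Type*} [CommRing R] (lam : ℕ → R) (s g a : ℕ) (B : Finset ℕ) :
    Matrix (Fin s × Fin B.card) (Fin s × Fin B.card) R :=
  blockVandermonde (fun m => kernelSigns s (enum B m)) (lam ∘ nodeIndex s g a B)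

theorem nodeIndex_eq_finProdFinEquiv {s g n : ℕ} {B : Finset ℕ} (hB : B ⊆ Finset.range g)
    (a : Fin n) (κ : Fin s × Fin B.card) :
    nodeIndex s g a B κ = (finProdFinEquiv (finProdFinEquiv
      (a, ⟨enum B κ.2, Finset.mem_range.1 (hB (enum_mem B κ.2))⟩), κ.1) : Fin (n * g * s)) := by
  simp only [nodeIndex, finProdFinEquiv_apply_val]
  ring

theorem nodeIndex_injective {s g n : ℕ} {B : Finset ℕ} (hB : B ⊆ Finset.range g) :
    Function.Injective fun p : Fin n × (Fin s × Fin B.card) => nodeIndex s g p.1 B p.2 := by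
  rintro ⟨a, j, m⟩ ⟨a', j', m'⟩ h
  simp only [nodeIndex_eq_finProdFinEquiv hB, Fin.val_inj, EmbeddingLike.apply_eq_iff_eq,
    Prod.mk.injEq, Fin.mk.injEq] at h
  obtain ⟨⟨rfl, hm⟩, rfl⟩ := h
  rw [enum_injective B hm]

theorem nodeIndex_div_mod {s g a : ℕ} {B : Finset ℕ} (hB : B ⊆ Finset.range g)
    (κ : Fin s × Fin B.card) : nodeIndex s g a B κ / s % g = enum B κ.2 := by
  have hb : enum B κ.2 < g := Finset.mem_range.1 (hB (enum_mem B κ.2))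
  have hindex : nodeIndex s g a B κ = κ.1 + s * (enum B κ.2 + g * a) := by
    rw [nodeIndex]
    ring
  rw [hindex, Nat.add_mul_div_left _ _ κ.1.pos, Nat.div_eq_of_lt κ.1.2, zero_add,
    Nat.add_mul_mod_self_left, Nat.mod_eq_of_lt hb]

theorem map_kernelMatrix {R R' : Type*} [CommRing R] [CommRing R'] (φ : R →+* R') (lam : ℕ → R)
    (s g a : ℕ) (B : Finset ℕ) :
    φ.mapMatrix (kernelMatrix lam s g a B) = kernelMatrix (φ ∘ lam) s g a B :=
  map_blockVandermonde φ _ _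

open MvPolynomial

variable {R : Type*} [CommRing R]

theorem eval_det_kernelMatrix_X (x : ℕ → R) (s g a : ℕ) (B : Finset ℕ) :
    eval x (kernelMatrix X s g a B).det = (kernelMatrix x s g a B).det := by
  rw [RingHom.map_det, map_kernelMatrix]
  congr 2
  ext i
  simp

theorem det_kernelMatrix_X_ne_zero [IsDomain R] (s a : ℕ) {g : ℕ} {B : Finset ℕ}
    (hB : B ⊆ Finset.range g) :
    (kernelMatrix (X : ℕ → MvPolynomial ℕ R) s g a B).det ≠ 0 := by
  -- Identify the indeterminates whose indices carry the same `b`.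
  let φ : MvPolynomial ℕ R →+* MvPolynomial ℕ R := (rename fun i => i / s % g).toRingHom
  let μ : Fin B.card → MvPolynomial ℕ R := fun m => X (enum B m)
  have hnodes : (φ ∘ X) ∘ nodeIndex s g a B = μ ∘ Prod.snd := by
    ext1 κ
    simp [φ, μ, nodeIndex_div_mod hB]
  have hμ : (vandermonde μ).det ≠ 0 :=
    det_vandermonde_ne_zero_iff.2 (X_injective.comp (enum_injective B))
  refine ne_zero_of_map (f := φ) ?_
  rw [RingHom.map_det, map_kernelMatrix, kernelMatrix, hnodes, det_blockVandermonde_comp_snd]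
  simp only [det_kernelSigns, Int.cast_one, Finset.prod_const_one, mul_one]
  exact pow_ne_zero _ hμ

theorem sum_degreeOf_det_kernelMatrix_X_le (s n : ℕ) {g : ℕ} {B : Finset ℕ}
    (hB : B ⊆ Finset.range g) (x : ℕ) :
    ∑ a : Fin n, degreeOf x (kernelMatrix (X : ℕ → MvPolynomial ℕ R) s g a B).det ≤ B.card - 1 :=
  calc
    _ ≤ ∑ a : Fin n, ∑ κ, if nodeIndex s g a B κ = x then B.card - 1 else 0 :=
      Finset.sum_le_sum fun _ _ => degreeOf_det_blockVandermonde_le _ _ x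
    _ = ∑ p : Fin n × (Fin s × Fin B.card),
          if nodeIndex s g p.1 B p.2 = x then B.card - 1 else 0 :=
      (Fintype.sum_prod_type' _).symm
    _ ≤ B.card - 1 := sum_ite_le_of_injective (nodeIndex_injective hB) x _

end Kernel

section BlockDiagonal

variable {s n : ℕ}

theorem digit_finFunctionFinEquiv (f : Fin n → Fin s) (u : Fin n) :
    digit s (finFunctionFinEquiv f) u = f u :=
  congrArg Fin.val (congrFun (finFunctionFinEquiv.symm_apply_apply f) u)

theorem digit_eq_zero_of_lt_pow {i u : ℕ} (hi : i < s ^ u) : digit s i u = 0 := by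
  rw [digit, Nat.div_eq_of_lt hi, Nat.zero_mod]

/-- The block index in `[0, sⁿ)` with prescribed `a`-th base-`s` digit and prescribed other
digits. -/
def digitEquiv (s : ℕ) (a : Fin n) : Fin s × ({u // u ≠ a} → Fin s) ≃ Fin (s ^ n) :=
  (Equiv.funSplitAt a (Fin s)).symm.trans finFunctionFinEquiv

variable (a : Fin n)

theorem digit_digitEquiv_self (p : Fin s × ({u // u ≠ a} → Fin s)) :
    digit s (digitEquiv s a p) a = p.1 := by
  rw [digitEquiv, Equiv.trans_apply, digit_finFunctionFinEquiv]
  simp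

theorem digit_digitEquiv_of_ne (p : Fin s × ({u // u ≠ a} → Fin s)) (u : {u // u ≠ a}) :
    digit s (digitEquiv s a p) (u : Fin n) = p.2 u := by
  rw [digitEquiv, Equiv.trans_apply, digit_finFunctionFinEquiv]
  simp [u.2]

theorem forall_digit_digitEquiv_eq_iff (p p' : Fin s × ({u // u ≠ a} → Fin s)) :
    (∀ u, u ≠ (a : ℕ) → digit s (digitEquiv s a p) u = digit s (digitEquiv s a p') u) ↔
      p.2 = p'.2 := by
  constructor
  · intro h
    ext u
    rw [← digit_digitEquiv_of_ne a p, ← digit_digitEquiv_of_ne a p']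
    exact h _ fun hu => u.2 (Fin.ext hu)
  · intro h u hu
    rcases lt_or_ge u n with hun | hnu
    · have hne : (⟨u, hun⟩ : Fin n) ≠ a := fun h => hu (congrArg Fin.val h)
      have hdigit := fun p => digit_digitEquiv_of_ne (s := s) a p ⟨⟨u, hun⟩, hne⟩
      exact (hdigit p).trans ((congrArg _ (congrFun h _)).trans (hdigit p').symm)
    · have hpow : s ^ n ≤ s ^ u := Nat.pow_le_pow_right p.1.pos hnu
      rw [digit_eq_zero_of_lt_pow ((digitEquiv s a p).2.trans_le hpow),
        digit_eq_zero_of_lt_pow ((digitEquiv s a p').2.trans_le hpow)]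

variable {F : Type*} [Field F] (lam : ℕ → F) (g : ℕ)

theorem Aent_digitEquiv (b z : ℕ) (p p' : Fin s × ({u // u ≠ a} → Fin s)) :
    Aent lam s g a b (digitEquiv s a p) (digitEquiv s a p') z =
      if p.2 = p'.2 then
        (kernelSigns s b p.1 p'.1 : F) * lam (a * s * g + b * s + p'.1) ^ z
      else 0 := by
  obtain ⟨i, o⟩ := p
  obtain ⟨j, o'⟩ := p'
  simp only [Aent, forall_digit_digitEquiv_eq_iff, digit_digitEquiv_self, Fin.val_inj,
    EmbeddingLike.apply_eq_iff_eq, Prod.mk.injEq, kernelSigns, Matrix.of_apply]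
  rcases eq_or_ne o o' with rfl | ho
  · rcases eq_or_ne i j with rfl | hij
    · simp
    · have hj : (i : ℕ) = b → (j : ℕ) ≠ b := fun h h' => hij (Fin.ext (h.trans h'.symm))
      simp [hij, and_iff_left_of_imp hj]
  · simp [ho]

/-- Regroups (block index, position) pairs according to the digits of the block index other than the
`a`-th one. -/
def regroupEquiv (s : ℕ) (a : Fin n) (t : ℕ) :
    (Fin s × Fin t) × ({u // u ≠ a} → Fin s) ≃ Fin (s ^ n) × Fin t where
  toFun q := (digitEquiv s a (q.1.1, q.2), q.1.2)
  invFun r := ((((digitEquiv s a).symm r.1).1, r.2), ((digitEquiv s a).symm r.1).2)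
  left_inv _ := by simp
  right_inv _ := by simp

/-- The regrouping of the rows of `AmatB`, where the block index is the quotient by `t`. -/
def rowEquiv (s : ℕ) (a : Fin n) (t : ℕ) :
    (Fin s × Fin t) × ({u // u ≠ a} → Fin s) ≃ Fin (s ^ n * t) :=
  (regroupEquiv s a t).trans finProdFinEquiv

/-- The regrouping of the columns of `AmatB`, where the block index is the remainder
modulo `s ^ n`. -/
def colEquiv (s : ℕ) (a : Fin n) (t : ℕ) :
    (Fin s × Fin t) × ({u // u ≠ a} → Fin s) ≃ Fin (s ^ n * t) :=
  (regroupEquiv s a t).trans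
    ((Equiv.prodComm _ _).trans (finProdFinEquiv.trans (finCongr (mul_comm t (s ^ n)))))

theorem AmatB_submatrix (B : Finset ℕ) :
    (AmatB lam s g (s ^ n) a B.card B).submatrix (rowEquiv s a B.card) (colEquiv s a B.card) =
      blockDiagonal fun _ : {u // u ≠ a} → Fin s => kernelMatrix lam s g a B := by
  ext ⟨⟨i, z⟩, o⟩ ⟨⟨j, m⟩, o'⟩
  let row : Fin (s ^ n) := digitEquiv s a (i, o)
  let col : Fin (s ^ n) := digitEquiv s a (j, o')
  have hrow : (rowEquiv s a B.card ((i, z), o) : ℕ) = z + B.card * row := rfl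
  have hcol : (colEquiv s a B.card ((j, m), o') : ℕ) = col + s ^ n * m := rfl
  rw [submatrix_apply, AmatB, Matrix.of_apply, hrow, hcol, Nat.add_mul_mod_self_left,
    Nat.add_mul_mod_self_left, Nat.mod_eq_of_lt z.2, Nat.mod_eq_of_lt col.2,
    Nat.add_mul_div_left _ _ z.pos, Nat.div_eq_of_lt z.2, zero_add,
    Nat.add_mul_div_left _ _ col.pos, Nat.div_eq_of_lt col.2, zero_add, Aent_digitEquiv]
  rfl

theorem det_AmatB_ne_zero {B : Finset ℕ} (hK : (kernelMatrix lam s g a B).det ≠ 0) :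
    (AmatB lam s g (s ^ n) a B.card B).det ≠ 0 := by
  have hdiag : IsUnit (blockDiagonal fun _ : {u // u ≠ a} → Fin s => kernelMatrix lam s g a B) := by
    rw [isUnit_iff_isUnit_det, det_blockDiagonal, isUnit_iff_ne_zero]
    exact Finset.prod_ne_zero_iff.2 fun _ _ => hK
  rw [← AmatB_submatrix, isUnit_submatrix_equiv, isUnit_iff_isUnit_det] at hdiag
  exact hdiag.ne_zero

end BlockDiagonal

theorem sum_powerset_range_card_sub_one (g : ℕ) :
    ∑ B ∈ (Finset.range g).powerset, (B.card - 1) =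
      ∑ t ∈ Finset.Icc 1 g, g.choose t * (t - 1) := by
  rw [Finset.sum_powerset_apply_card (fun t => t - 1), Finset.card_range, Finset.range_eq_Ico,
    Finset.sum_eq_sum_Ico_succ_bot g.succ_pos]
  simp only [Nat.zero_sub, smul_eq_mul, mul_zero, zero_add]
  rfl

theorem sum_choose_mul_sub_one_le (s : ℕ) :
    ∑ t ∈ Finset.Icc 1 s, s.choose t * (t - 1) ≤
      ∑ t ∈ Finset.Icc 1 s, s.choose t * (s * t * (t - 1) / 2) := by
  refine Finset.sum_le_sum fun t ht => Nat.mul_le_mul_left _ ?_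
  obtain ⟨ht₁, hts⟩ := Finset.mem_Icc.1 ht
  rcases ht₁.eq_or_lt with rfl | ht₂
  · simp
  · rw [Nat.le_div_iff_mul_le two_pos, mul_comm]
    exact Nat.mul_le_mul_right _ (by nlinarith)

theorem statement0_general (F : Type*) [Field F] (S : Finset F) (s g groups : ℕ)
    (hbound : groups * s * g - 1 + ∑ t ∈ Finset.Icc 1 g, g.choose t * (t - 1) < S.card) :
    ∃ lam : ℕ → F,
      (∀ i, lam i ∈ S) ∧
      (∀ i < groups * s * g, ∀ j < groups * s * g, lam i = lam j → i = j) ∧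
      LocalConstraints lam s g (s ^ groups) groups := by
  let K : Finset (Fin groups × Finset ℕ) := Finset.univ ×ˢ (Finset.range g).powerset
  let P : Fin groups × Finset ℕ → MvPolynomial ℕ F := fun k =>
    (kernelMatrix MvPolynomial.X s g k.1 k.2).det
  have hP : ∀ k ∈ K, P k ≠ 0 := fun k hk =>
    det_kernelMatrix_X_ne_zero s k.1 (Finset.mem_powerset.1 (Finset.mem_product.1 hk).2)
  have hdeg : ∀ x, ∑ k ∈ K, (P k).degreeOf x ≤ ∑ t ∈ Finset.Icc 1 g, g.choose t * (t - 1) := by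
    intro x
    rw [Finset.sum_product_right, ← sum_powerset_range_card_sub_one]
    exact Finset.sum_le_sum fun B hB =>
      sum_degreeOf_det_kernelMatrix_X_le s groups (Finset.mem_powerset.1 hB) x
  obtain ⟨lam, hS, hinj, hlam⟩ := exists_mem_injective_eval_ne_zero hP
    (Fin.val_injective (n := groups * s * g)) (fun _ => S)
    fun x => (Nat.add_le_add_left (hdeg x) _).trans_lt hbound
  refine ⟨lam, hS, fun i hi j hj h => congrArg Fin.val (@hinj ⟨i, hi⟩ ⟨j, hj⟩ h), ?_⟩
  intro a ha B hB _
  have hdet := hlam (⟨a, ha⟩, B) (Finset.mem_product.2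
    ⟨Finset.mem_univ _, Finset.mem_powerset.2 hB⟩)
  rw [eval_det_kernelMatrix_X] at hdet
  exact det_AmatB_ne_zero ⟨a, ha⟩ lam g hdet

/-- Lemma 1 of the paper: if
`q ≥ ns + Σ_{t=1}^{s} C(s,t)·s·t·(t−1)/2`, then there exist `ns` pairwise distinct
elements `λ_0, …, λ_{ns−1}` of `F_q` satisfying the local constraints
`det(A_{a,B}) ≠ 0` for all `a ∈ [n/s]` and all nonempty `B ⊆ [s]`. -/
theorem statement0 (F : Type*) [Field F] [Fintype F] (q n k d s ℓ : ℕ)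
    (hq : Fintype.card F = q)
    (hk : 1 ≤ k) (hkn : k < n) (hd₁ : k + 1 ≤ d) (hd₂ : d ≤ n - 1)
    (hs : s = d - k + 1) (hdiv : s ∣ n) (hℓ : ℓ = s ^ (n / s))
    (hbound : n * s + ∑ t ∈ Finset.Icc 1 s, s.choose t * (s * t * (t - 1) / 2) ≤ q) :
    ∃ lam : ℕ → F,
      (∀ i < n * s, ∀ j < n * s, lam i = lam j → i = j) ∧
      LocalConstraints lam s s ℓ (n / s) := by
  have hs₀ : 0 < s := by omega
  obtain ⟨m, rfl⟩ := hdiv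
  rw [Nat.mul_div_cancel_left m hs₀] at hℓ ⊢
  rw [mul_comm s m] at hbound hkn ⊢
  subst hℓ hq
  have hpos : 0 < m * s * s := Nat.mul_pos (by omega) hs₀
  have hchoose := sum_choose_mul_sub_one_le s
  obtain ⟨lam, -, hlam⟩ := statement0_general F Finset.univ s s m (by
    rw [Finset.card_univ]
    omega)
  exact ⟨lam, hlam⟩
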